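/- For every integer n ≥ 1, the number of non-decreasing vacillating parking functions of length n is given by the closed formula |VPF_n^↑| = ((1 + √2)^n + (1 − √2)^n)/2, where the right-hand side is computed in the real numbers. -/

import Mathlib

/-- One car with (1-indexed) preference `p` attempts to park on a one-way street with
spots `1,…,n` under the `k`-vacillating rule, given the set `occ` of occupied spots:
it parks in spot `p` if unoccupied; otherwise in spot `p - k` if `p - k ≥ 1` and it is
unoccupied; otherwise in spot `p + k` if `p + k ≤ n` and it is unoccupied; otherwise it
fails to park (`none`). -/
def parkStep (n k : ℕ) (occ : Finset ℕ) (p : ℕ) : Option ℕ :=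
  if p ∉ occ then some p
  else if k < p ∧ p - k ∉ occ then some (p - k)
  else if p + k ≤ n ∧ p + k ∉ occ then some (p + k)
  else none

/-- Park the cars whose preference list is given, in order, under the `k`-vacillating
rule on a street with spots `1,…,n`, starting from occupied set `occ`.  Returns the list
of spots occupied by the cars (in the order the cars arrive), or `none` if some car
fails to park. -/
def parkAssign (n k : ℕ) (occ : Finset ℕ) : List ℕ → Option (List ℕ)
  | [] => some []
  | p :: ps =>
    match parkStep n k occ p with
    | none => none
    | some s => (parkAssign n k (insert s occ) ps).map (s :: ·)

/-- The 1-indexed preference list in `[n]^m` associated to `α : Fin m → Fin n`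
(car `i+1` prefers spot `α i + 1`). -/
def prefList {m n : ℕ} (α : Fin m → Fin n) : List ℕ :=
  List.ofFn fun i => (α i : ℕ) + 1

/-- The set of `k`-vacillating parking functions of length `n`:
preference lists in `[n]^n` (encoded as `Fin n → Fin n`) for which all `n` cars park. -/
def VPFk (n k : ℕ) : Finset (Fin n → Fin n) :=
  Finset.univ.filter fun α => (parkAssign n k ∅ (prefList α)).isSome

/-- The set of vacillating parking functions of length `n` (the case `k = 1`). -/
def VPF (n : ℕ) : Finset (Fin n → Fin n) := VPFk n 1

/-- The set of non-decreasing vacillating parking functions of length `n`. -/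
def VPFup (n : ℕ) : Finset (Fin n → Fin n) :=
  (VPF n).filter fun α => ∀ i j : Fin n, i ≤ j → α i ≤ α j

/-- If all remaining cars prefer spots at least two to the right of a free spot `s`, then `s`
stays free, so the cars cannot fill the street. -/
lemma card_add_length_lt_of_free_spot {n s : ℕ} (hs : 1 ≤ s) (hsn : s ≤ n) (l : List ℕ) :
    ∀ occ : Finset ℕ, occ ⊆ Finset.Icc 1 n → s ∉ occ → (∀ p ∈ l, s + 2 ≤ p ∧ p ≤ n) →
      (parkAssign n 1 occ l).isSome → occ.card + l.length < n := by
  induction l with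
  | nil =>
    intro occ hocc hfree _ _
    have hssub : occ ⊂ Finset.Icc 1 n :=
      (Finset.ssubset_iff_of_subset hocc).2 ⟨s, Finset.mem_Icc.2 ⟨hs, hsn⟩, hfree⟩
    simpa using Finset.card_lt_card hssub
  | cons p ps ih =>
    intro occ hocc hfree hpref hpark
    have hp := hpref p (by simp)
    cases hstep : parkStep n 1 occ p with
    | none => simp [parkAssign, hstep] at hpark
    | some t =>
      have ht : t ∉ occ ∧ s < t ∧ t ≤ n := by
        unfold parkStep at hstep
        split_ifs at hstep with h₁ h₂ h₃ <;> simp only [Option.some.injEq] at hstep <;>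
          subst hstep
        · exact ⟨h₂.2, by omega, by omega⟩
        · exact ⟨h₃.2, by omega, h₃.1⟩
        · exact ⟨h₁, by omega, hp.2⟩
      have hrec := ih (insert t occ)
        (Finset.insert_subset (Finset.mem_Icc.2 ⟨by omega, ht.2.2⟩) hocc)
        (by simp only [Finset.mem_insert, not_or]; exact ⟨by omega, hfree⟩)
        (fun q hq => hpref q (by simp [hq]))
        (by simpa [parkAssign, hstep] using hpark)
      rw [Finset.card_insert_of_notMem ht.1] at hrec
      simp only [List.length_cons]
      omega

/-- `l` is a non-decreasing list of preferences, all in `[max 1 m, n]`, with which `n - m` cars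
fill the street `1,…,n` once the spots `1,…,m` are occupied. -/
def IsVacillatingTail (n m : ℕ) (l : List ℕ) : Prop :=
  m + l.length = n ∧ l.Pairwise (· ≤ ·) ∧ (∀ p ∈ l, 1 ≤ p ∧ m ≤ p ∧ p ≤ n) ∧
    (parkAssign n 1 (Finset.Icc 1 m) l).isSome

lemma isSome_parkAssign_cons {n k : ℕ} {occ : Finset ℕ} {p s : ℕ} {ps : List ℕ}
    (h : parkStep n k occ p = some s) :
    (parkAssign n k occ (p :: ps)).isSome = (parkAssign n k (insert s occ) ps).isSome := by
  simp [parkAssign, h]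

lemma insert_succ_Icc_one (m : ℕ) :
    insert (m + 1) (Finset.Icc 1 m) = Finset.Icc 1 (m + 1) := by
  ext x; simp only [Finset.mem_insert, Finset.mem_Icc]; omega

lemma insert_succ_insert_Icc_one (m : ℕ) :
    insert (m + 1) (insert (m + 2) (Finset.Icc 1 m)) = Finset.Icc 1 (m + 2) := by
  ext x; simp only [Finset.mem_insert, Finset.mem_Icc]; omega

lemma parkStep_Icc_of_eq_or {n m q : ℕ} (hq : 1 ≤ q) (hqm : q = m ∨ q = m + 1) (hmn : m < n) :
    parkStep n 1 (Finset.Icc 1 m) q = some (m + 1) := by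
  unfold parkStep
  simp only [Finset.mem_Icc]
  grind

lemma parkStep_Icc_add_two (n m : ℕ) :
    parkStep n 1 (Finset.Icc 1 m) (m + 2) = some (m + 2) := by
  simp [parkStep]

lemma parkStep_insert_Icc_add_two (n m : ℕ) :
    parkStep n 1 (insert (m + 2) (Finset.Icc 1 m)) (m + 2) = some (m + 1) := by
  simp [parkStep]

lemma parkStep_Icc_succ_eq_none {n m : ℕ} (hm : 1 ≤ m) :
    parkStep n 1 (Finset.Icc 1 (m + 1)) m = none := by
  unfold parkStep
  simp only [Finset.mem_Icc]
  grind

lemma isVacillatingTail_nil (n m : ℕ) : IsVacillatingTail n m [] ↔ m = n := by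
  simp [IsVacillatingTail, parkAssign]

lemma isVacillatingTail_cons (n m q : ℕ) (t : List ℕ) :
    IsVacillatingTail n m (q :: t) ↔
      (1 ≤ q ∧ (q = m ∨ q = m + 1) ∧ IsVacillatingTail n (m + 1) t) ∨
      (q = m + 2 ∧ ∃ u, t = (m + 2) :: u ∧ IsVacillatingTail n (m + 2) u) := by
  constructor
  · rintro ⟨hlen, hsort, hpref, hpark⟩
    simp only [List.length_cons] at hlen
    rw [List.pairwise_cons] at hsort
    have hq := hpref q (by simp)
    have hocc : Finset.Icc 1 m ⊆ Finset.Icc 1 n := Finset.Icc_subset_Icc_right (by omega)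
    rcases (by omega : (q = m ∨ q = m + 1) ∨ q = m + 2 ∨ m + 3 ≤ q) with hqm | hqm | hqm
    · refine Or.inl ⟨hq.1, hqm, by omega, hsort.2, ?_, ?_⟩
      · rw [isSome_parkAssign_cons (parkStep_Icc_of_eq_or hq.1 hqm (by omega)),
          insert_succ_Icc_one] at hpark
        have hhead : ∀ p ∈ t, m + 1 ≤ p := by
          cases t with
          | nil => simp
          | cons r u =>
            have hr : r ≠ m := by
              rintro rfl
              have hr₁ := hpref r (by simp)
              simp [parkAssign, parkStep_Icc_succ_eq_none hr₁.1] at hpark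
            have hr₂ := hsort.1 r (by simp)
            have hu := (List.pairwise_cons.1 hsort.2).1
            intro p hp
            rcases List.mem_cons.1 hp with rfl | hp
            · omega
            · have := hu p hp
              omega
        intro p hp
        have hp' := hpref p (by simp [hp])
        exact ⟨hp'.1, hhead p hp, hp'.2.2⟩
      · rwa [isSome_parkAssign_cons (parkStep_Icc_of_eq_or hq.1 hqm (by omega)),
          insert_succ_Icc_one] at hpark
    · subst hqm
      refine Or.inr ⟨rfl, ?_⟩
      rw [isSome_parkAssign_cons (parkStep_Icc_add_two n m)] at hpark
      by_cases hall : ∀ p ∈ t, m + 1 + 2 ≤ p ∧ p ≤ n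
      · have hlt := card_add_length_lt_of_free_spot (s := m + 1) (by omega) (by omega) t
          (insert (m + 2) (Finset.Icc 1 m))
          (Finset.insert_subset (Finset.mem_Icc.2 ⟨by omega, hq.2.2⟩) hocc)
          (by simp) hall hpark
        rw [Finset.card_insert_of_notMem (by simp), Nat.card_Icc] at hlt
        omega
      · cases t with
        | nil => simp at hall
        | cons r u =>
          have hu := List.pairwise_cons.1 hsort.2
          have hr : r = m + 2 := by
            by_contra hne
            apply hall
            have hr := hsort.1 r (by simp)
            intro p hp
            refine ⟨?_, (hpref p (by simp [hp])).2.2⟩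
            rcases List.mem_cons.1 hp with rfl | hp
            · omega
            · have := hu.1 p hp
              omega
          subst hr
          rw [isSome_parkAssign_cons (parkStep_insert_Icc_add_two n m),
            insert_succ_insert_Icc_one] at hpark
          simp only [List.length_cons] at hlen
          refine ⟨u, rfl, by omega, hu.2, fun p hp => ?_, hpark⟩
          have hp' := hpref p (by simp [hp])
          exact ⟨hp'.1, hu.1 p hp, hp'.2.2⟩
    · have hlt := card_add_length_lt_of_free_spot (s := m + 1) (by omega) (by omega) (q :: t)
        (Finset.Icc 1 m) hocc (by simp)
        (fun p hp => ⟨by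
          rcases List.mem_cons.1 hp with rfl | hp'
          · omega
          · have := hsort.1 p hp'
            omega, (hpref p hp).2.2⟩) hpark
      rw [Nat.card_Icc] at hlt
      simp only [List.length_cons] at hlt
      omega
  · rintro (⟨hq, hqm, hlen, hsort, hpref, hpark⟩ | ⟨rfl, u, rfl, hlen, hsort, hpref, hpark⟩)
    · refine ⟨by simp only [List.length_cons]; omega,
        List.pairwise_cons.2 ⟨fun p hp => ?_, hsort⟩, fun p hp => ?_, ?_⟩
      · have := hpref p hp
        omega
      · rcases List.mem_cons.1 hp with rfl | hp
        · omega
        · have := hpref p hp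
          omega
      · rwa [isSome_parkAssign_cons (parkStep_Icc_of_eq_or hq hqm (by omega)),
          insert_succ_Icc_one]
    · have hle : ∀ p ∈ u, m + 2 ≤ p := fun p hp => (hpref p hp).2.1
      refine ⟨by simp only [List.length_cons]; omega,
        List.pairwise_cons.2 ⟨fun p hp => ?_, List.pairwise_cons.2 ⟨hle, hsort⟩⟩,
        fun p hp => ?_, ?_⟩
      · rcases List.mem_cons.1 hp with rfl | hp
        · exact le_rfl
        · exact hle p hp
      · simp only [List.mem_cons] at hp
        rcases hp with rfl | rfl | hp
        · omega
        · omega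
        · have := hpref p hp
          omega
      · rwa [isSome_parkAssign_cons (parkStep_Icc_add_two n m),
          isSome_parkAssign_cons (parkStep_insert_Icc_add_two n m), insert_succ_insert_Icc_one]

/-- The lists consisting of a preference in `{m, m + 1}`, at least `1`, followed by a member
of `S`. -/
def singleSpotExtensions (m : ℕ) (S : Finset (List ℕ)) : Finset (List ℕ) :=
  ((({m, m + 1} : Finset ℕ).filter (1 ≤ ·)) ×ˢ S).image fun x => x.1 :: x.2

/-- The preference lists of length `r` that complete the filling of a street of length `m + r`
whose first `m` spots are occupied. -/
def vacillatingTails : ℕ → ℕ → Finset (List ℕ)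
  | _, 0 => {[]}
  | m, 1 => singleSpotExtensions m {[]}
  | m, r + 2 => singleSpotExtensions m (vacillatingTails (m + 1) (r + 1)) ∪
      (vacillatingTails (m + 2) r).image fun t => (m + 2) :: (m + 2) :: t

lemma cons_mem_singleSpotExtensions {m q : ℕ} {t : List ℕ} {S : Finset (List ℕ)} :
    q :: t ∈ singleSpotExtensions m S ↔ 1 ≤ q ∧ (q = m ∨ q = m + 1) ∧ t ∈ S := by
  simp only [singleSpotExtensions, Finset.mem_image, Finset.mem_product, Finset.mem_filter,
    Finset.mem_insert, Finset.mem_singleton, Prod.exists, List.cons.injEq]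
  constructor
  · rintro ⟨a, b, ⟨⟨h₁, h₂⟩, h₃⟩, rfl, rfl⟩
    exact ⟨h₂, h₁, h₃⟩
  · rintro ⟨h₂, h₁, h₃⟩
    exact ⟨q, t, ⟨⟨h₁, h₂⟩, h₃⟩, rfl, rfl⟩

lemma nil_notMem_singleSpotExtensions {m : ℕ} {S : Finset (List ℕ)} :
    [] ∉ singleSpotExtensions m S := by
  simp [singleSpotExtensions]

lemma card_singleSpotExtensions (m : ℕ) (S : Finset (List ℕ)) :
    (singleSpotExtensions m S).card = (if m = 0 then 1 else 2) * S.card := by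
  rw [singleSpotExtensions, Finset.card_image_of_injective _ (fun x y h => by
    simp only [List.cons.injEq] at h
    exact Prod.ext h.1 h.2), Finset.card_product]
  congr 1
  split_ifs with hm
  · subst hm
    decide
  · rw [Finset.filter_true_of_mem (by simp; omega)]
    simp

lemma mem_vacillatingTails (m r : ℕ) (l : List ℕ) :
    l ∈ vacillatingTails m r ↔ IsVacillatingTail (m + r) m l := by
  induction m, r using vacillatingTails.induct generalizing l with
  | case1 m =>
    cases l with
    | nil => simp [vacillatingTails, isVacillatingTail_nil]
    | cons q t => simp [vacillatingTails, IsVacillatingTail]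
  | case2 m =>
    cases l with
    | nil => simp [vacillatingTails, isVacillatingTail_nil, nil_notMem_singleSpotExtensions]
    | cons q t =>
      rw [vacillatingTails, cons_mem_singleSpotExtensions, isVacillatingTail_cons]
      cases t with
      | nil => simp [isVacillatingTail_nil]
      | cons p u =>
        simp only [Finset.mem_singleton, IsVacillatingTail, List.length_cons]
        grind
  | case3 m r ih₁ ih₂ =>
    cases l with
    | nil => simp [vacillatingTails, isVacillatingTail_nil, nil_notMem_singleSpotExtensions]
    | cons q t =>
      rw [vacillatingTails, Finset.mem_union, cons_mem_singleSpotExtensions,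
        isVacillatingTail_cons, ih₁, show m + 1 + (r + 1) = m + (r + 2) by ring]
      refine or_congr Iff.rfl ?_
      simp only [Finset.mem_image, ih₂, List.cons.injEq, show m + 2 + r = m + (r + 2) by ring]
      constructor
      · rintro ⟨u, hu, rfl, rfl⟩
        exact ⟨rfl, u, rfl, hu⟩
      · rintro ⟨rfl, u, rfl, hu⟩
        exact ⟨u, hu, rfl, rfl⟩

lemma card_vacillatingTails_add_two (m r : ℕ) :
    (vacillatingTails m (r + 2)).card =
      (if m = 0 then 1 else 2) * (vacillatingTails (m + 1) (r + 1)).card +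
        (vacillatingTails (m + 2) r).card := by
  rw [vacillatingTails, Finset.card_union_of_disjoint, card_singleSpotExtensions,
    Finset.card_image_of_injective _ (fun x y h => by simpa using h)]
  rw [Finset.disjoint_right]
  intro l hl
  obtain ⟨u, -, rfl⟩ := Finset.mem_image.1 hl
  rw [cons_mem_singleSpotExtensions]
  omega

lemma card_vacillatingTails_of_pos (m r : ℕ) (hm : 1 ≤ m) :
    ((vacillatingTails m r).card : ℝ) * (2 * Real.sqrt 2) =
      (1 + Real.sqrt 2) ^ (r + 1) - (1 - Real.sqrt 2) ^ (r + 1) := by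
  have hsq : Real.sqrt 2 ^ 2 = 2 := Real.sq_sqrt (by norm_num)
  induction m, r using vacillatingTails.induct with
  | case1 m => simp [vacillatingTails]; ring
  | case2 m =>
    simp [vacillatingTails, card_singleSpotExtensions, show m ≠ 0 by omega]; ring
  | case3 m r ih₁ ih₂ =>
    have h₁ := ih₁ (by omega)
    have h₂ := ih₂ (by omega)
    rw [card_vacillatingTails_add_two, if_neg (by omega)]
    push_cast [Nat.succ_eq_add_one]
    have ha : (1 + Real.sqrt 2) ^ 2 = 2 * (1 + Real.sqrt 2) + 1 := by linear_combination hsq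
    have hb : (1 - Real.sqrt 2) ^ 2 = 2 * (1 - Real.sqrt 2) + 1 := by linear_combination hsq
    linear_combination 2 * h₁ + h₂ - (1 + Real.sqrt 2) ^ (r + 1) * ha +
      (1 - Real.sqrt 2) ^ (r + 1) * hb

lemma card_vacillatingTails_zero (n : ℕ) (hn : 1 ≤ n) :
    ((vacillatingTails 0 n).card : ℝ) =
      ((1 + Real.sqrt 2) ^ n + (1 - Real.sqrt 2) ^ n) / 2 := by
  match n, hn with
  | 1, _ => simp [vacillatingTails, card_singleSpotExtensions]
  | r + 2, _ =>
    have hsq : Real.sqrt 2 ^ 2 = 2 := Real.sq_sqrt (by norm_num)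
    have hne : 2 * Real.sqrt 2 ≠ 0 := by positivity
    rw [card_vacillatingTails_add_two, if_pos rfl]
    have h₁ := card_vacillatingTails_of_pos 1 (r + 1) le_rfl
    have h₂ := card_vacillatingTails_of_pos 2 r (by omega)
    push_cast
    apply mul_right_cancel₀ hne
    linear_combination h₁ + h₂ - ((1 + Real.sqrt 2) ^ (r + 1) - (1 - Real.sqrt 2) ^ (r + 1)) * hsq

lemma prefList_injective {m n : ℕ} :
    Function.Injective (prefList : (Fin m → Fin n) → List ℕ) := by
  intro α β h
  funext i
  have := congrFun (List.ofFn_injective h) i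
  exact Fin.ext (by simpa using this)

lemma image_prefList_VPFup (n : ℕ) : (VPFup n).image prefList = vacillatingTails 0 n := by
  ext l
  rw [mem_vacillatingTails, Finset.mem_image]
  simp only [VPFup, VPF, VPFk, Finset.mem_filter, Finset.mem_univ, true_and, zero_add,
    IsVacillatingTail]
  constructor
  · rintro ⟨α, ⟨hpark, hmono⟩, rfl⟩
    refine ⟨by simp [prefList], ?_, ?_, by simpa using hpark⟩
    · rw [prefList, List.pairwise_ofFn]
      intro i j hij
      have := hmono i j hij.le
      simpa using this
    · intro p hp
      obtain ⟨i, rfl⟩ := (List.mem_ofFn' _ _).1 hp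
      have := (α i).isLt
      simp only
      omega
  · rintro ⟨hlen, hsort, hpref, hpark⟩
    subst hlen
    have hget : ∀ i : Fin l.length, 1 ≤ l.get i ∧ l.get i ≤ l.length := fun i =>
      ⟨(hpref _ (l.get_mem i)).1, (hpref _ (l.get_mem i)).2.2⟩
    have hlist : prefList (fun i : Fin l.length =>
        (⟨l.get i - 1, by have := hget i; omega⟩ : Fin l.length)) = l := by
      rw [prefList]
      conv_rhs => rw [← List.ofFn_get l]
      congr 1
      funext i
      have := hget i
      simp only
      omega
    refine ⟨_, ⟨by rw [hlist]; simpa using hpark, fun i j hij => ?_⟩, hlist⟩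
    rcases hij.eq_or_lt with rfl | hij
    · exact le_rfl
    · have := List.pairwise_iff_get.1 hsort i j hij
      simp only [Fin.mk_le_mk]
      omega

/-- For every `n ≥ 1`,
`|VPF_n^↑| = ((1 + √2)^n + (1 − √2)^n)/2` in the real numbers. -/
theorem vpfup_card_closed_form (n : ℕ) (hn : 1 ≤ n) :
    ((VPFup n).card : ℝ) =
      ((1 + Real.sqrt 2) ^ n + (1 - Real.sqrt 2) ^ n) / 2 := by
  rw [← card_vacillatingTails_zero n hn, ← image_prefList_VPFup,
    Finset.card_image_of_injective _ prefList_injective]
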